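/- Let d ≥ 3 be odd. There exists a constant C = C(d) > 0 such that the following holds: for every finite field F_q with q = p̲^l elements, where p̲ is an odd prime with p̲ ≡ 3 (mod 4) and l(d−1) is not a multiple of four, and every subset E of the paraboloid S ⊂ F_q^d, one has Λ_4(E) ≤ C · min{ |E|^3, q^{−1}|E|^3 + q^{(d−3)/4}|E|^{5/2} + q^{(d−2)/2}|E|^2 }. -/

import Mathlib

open Finset

noncomputable section

/-- The dot product on `F^n`. -/
def dotp {F : Type} [CommRing F] {n : ℕ} (x y : Fin n → F) : F := ∑ i, x i * y i

/-- The paraboloid `S = {(x̄, x_d) : x_d = x̄ ⬝ x̄}` in `F^d = F^{d-1} × F`. -/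
def parab (F : Type) [CommRing F] [Fintype F] [DecidableEq F] (d : ℕ) :
    Finset ((Fin (d - 1) → F) × F) :=
  Finset.univ.filter fun x => x.2 = dotp x.1 x.1

/-- `Λ₄(E)`: the number of additive quadruples `(x,y,z,w) ∈ E⁴` with `x + y = z + w`. -/
def lambda4 {F : Type} [CommRing F] [Fintype F] [DecidableEq F] {d : ℕ}
    (E : Finset ((Fin (d - 1) → F) × F)) : ℕ :=
  ((E ×ˢ E ×ˢ E ×ˢ E).filter fun t => t.1 + t.2.1 = t.2.2.1 + t.2.2.2).card

/-!
Over the paraboloid, `x + y = z + w` forces the projections of `x`, `z`, `y` to `A ⊆ F_q^{d-1}` to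
form a triangle with a right angle at `z`, and these three points determine the quadruple, so it
suffices to count right angles in `A`.

Fix `x`. For `z - x` non-isotropic, the hyperplanes of those `y` that make a right angle at `z`
contain a proportion `1 / q` of the space, and any two of them meet in a proportion at most
`1 / q²` (they are disjoint when parallel). So they are nearly pairwise independent, and a second
moment computation bounds their incidences with `A`.

For `z - x` isotropic, `y` is bounded trivially, so one needs few isotropic differences. The
function `q · 1_{u ⬝ u = 0} - 1` is a sum of quadratic phases, hence an eigenfunction of the Fourier
transform; as `q ≡ 3 (mod 4)` and `(d - 1) / 2` is odd, the Gauss sums make its eigenvalue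
`-q^{(d-1)/2}` negative. By Parseval, the trivial lower bound `-1` for this function then becomes an
upper bound for the number of isotropic differences.
-/

open scoped Matrix

section SecondMoment

variable {α κ : Type*} [Fintype α] [DecidableEq α]

theorem sum_balanced_mul_balanced (S T : Finset α) (q : ℝ) :
    ∑ y, (q * (if y ∈ S then 1 else 0) - 1) * (q * (if y ∈ T then 1 else 0) - 1) =
      q ^ 2 * #(S ∩ T) - q * #S - q * #T + Fintype.card α := by
  have hST (y : α) : (if y ∈ S ∩ T then 1 else 0 : ℝ) =
      (if y ∈ S then 1 else 0) * (if y ∈ T then 1 else 0) := by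
    simp only [mem_inter, ite_and, ite_mul, one_mul, zero_mul]
  calc _ = ∑ y, (q ^ 2 * (if y ∈ S ∩ T then 1 else 0) - q * (if y ∈ S then 1 else 0)
        - q * (if y ∈ T then 1 else 0) + 1) :=
        sum_congr rfl fun y _ ↦ by rw [hST]; ring
    _ = _ := by
      simp only [sum_add_distrib, sum_sub_distrib, ← mul_sum]
      simp [-mem_inter]

theorem sum_sq_sum_balanced_le (H : κ → Finset α) (B : Finset κ) {q : ℝ}
    (hH : ∀ z ∈ B, q * #(H z) = Fintype.card α)
    (hHH : ∀ z ∈ B, ∀ z' ∈ B, z ≠ z' → q ^ 2 * #(H z ∩ H z') ≤ Fintype.card α) :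
    ∑ y, (∑ z ∈ B, (q * (if y ∈ H z then 1 else 0) - 1)) ^ 2 ≤
      #B * ((q - 1) * Fintype.card α) := by
  classical
  simp only [sq, sum_mul_sum]
  rw [sum_comm]
  simp only [sum_comm (s := univ)]
  calc _ ≤ ∑ z ∈ B, ∑ z' ∈ B, if z = z' then (q - 1) * (Fintype.card α : ℝ) else 0 := by
        refine sum_le_sum fun z hz ↦ sum_le_sum fun z' hz' ↦ ?_
        rw [sum_balanced_mul_balanced, hH z hz, hH z' hz']
        split_ifs with h
        · subst h
          rw [inter_self, sq, mul_assoc, hH z hz]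
          linarith
        · linarith [hHH z hz z' hz' h]
    _ = _ := by simp

theorem sq_sum_card_inter_sub_le (H : κ → Finset α) (A : Finset α) (B : Finset κ) {q : ℝ}
    (hH : ∀ z ∈ B, q * #(H z) = Fintype.card α)
    (hHH : ∀ z ∈ B, ∀ z' ∈ B, z ≠ z' → q ^ 2 * #(H z ∩ H z') ≤ Fintype.card α) :
    (q * ∑ z ∈ B, (#(A ∩ H z) : ℝ) - #A * #B) ^ 2 ≤ #A * (#B * ((q - 1) * Fintype.card α)) :=
  calc _ = (∑ y ∈ A, ∑ z ∈ B, (q * (if y ∈ H z then 1 else 0) - 1)) ^ 2 := by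
        rw [sum_comm]
        simp [sum_sub_distrib, ← mul_sum, mul_comm]
    _ ≤ #A * ∑ y ∈ A, (∑ z ∈ B, (q * (if y ∈ H z then 1 else 0) - 1)) ^ 2 :=
        sq_sum_le_card_mul_sum_sq
    _ ≤ #A * ∑ y, (∑ z ∈ B, (q * (if y ∈ H z then 1 else 0) - 1)) ^ 2 := by
        gcongr
        exact subset_univ A
    _ ≤ _ := by
        gcongr
        exact sum_sq_sum_balanced_le H B hH hHH

end SecondMoment

section LinearSystem

variable {F ι κ : Type*} [Field F] [Fintype ι]

theorem surjective_dotProduct_of_linearIndependent [Finite κ] {v : κ → ι → F}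
    (hv : LinearIndependent F v) : Function.Surjective fun (y : ι → F) i ↦ v i ⬝ᵥ y := by
  have := Fintype.ofFinite κ
  have h : LinearMap.range (Matrix.of v).mulVecLin = ⊤ :=
    Submodule.eq_top_of_finrank_eq <|
      (LinearIndependent.rank_matrix hv).trans (Module.finrank_fintype_fun_eq_card F).symm
  exact LinearMap.range_eq_top.mp h

theorem card_pow_mul_card_dotProduct_eq [Fintype F] [DecidableEq F] [DecidableEq ι] [Fintype κ]
    {v : κ → ι → F} (hv : LinearIndependent F v) (c : κ → F) :
    Fintype.card F ^ Fintype.card κ * #{y | ∀ i, v i ⬝ᵥ y = c i} =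
      Fintype.card F ^ Fintype.card ι := by
  classical
  let f := (Matrix.of v).mulVecLin
  have hf : Function.Surjective f := surjective_dotProduct_of_linearIndependent hv
  have hfiber (c' : κ → F) : #{y | f y = c'} = #{y | ∀ i, v i ⬝ᵥ y = c i} := by
    rw [AddMonoidHom.card_fiber_eq_of_mem_range f (hf c') (hf c)]
    simp only [funext_iff]
    rfl
  calc _ = ∑ c' : κ → F, #{y | f y = c'} := by simp [hfiber]
    _ = #(univ : Finset (ι → F)) := (card_eq_sum_card_fiberwise fun _ _ ↦ mem_univ _).symm
    _ = _ := by simp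

end LinearSystem

section PerpHyperplane

variable {F ι : Type*} [Field F] [Fintype F] [DecidableEq F] [Fintype ι] [DecidableEq ι]

/-- The points `y` for which the triangle `x z y` has a right angle at `z`: the hyperplane through
`z` orthogonal to `z - x` (all of `ι → F` when `z = x`). -/
def perpHyperplane (x z : ι → F) : Finset (ι → F) := {y | (z - x) ⬝ᵥ (y - z) = 0}

theorem mem_perpHyperplane {x y z : ι → F} :
    y ∈ perpHyperplane x z ↔ (z - x) ⬝ᵥ (y - z) = 0 := by
  simp [perpHyperplane]

theorem mem_perpHyperplane_iff_dotProduct_eq {x y z : ι → F} :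
    y ∈ perpHyperplane x z ↔ (z - x) ⬝ᵥ y = (z - x) ⬝ᵥ z := by
  rw [mem_perpHyperplane, dotProduct_sub, sub_eq_zero]

theorem card_mul_card_perpHyperplane {x z : ι → F} (hzx : z ≠ x) :
    Fintype.card F * #(perpHyperplane x z) = Fintype.card F ^ Fintype.card ι := by
  have hv : LinearIndependent F fun _ : Unit ↦ z - x :=
    linearIndependent_unique_iff.mpr (sub_ne_zero.mpr hzx)
  rw [← card_pow_mul_card_dotProduct_eq hv fun _ ↦ (z - x) ⬝ᵥ z, Fintype.card_unit, pow_one]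
  congr 2
  ext y
  simp [mem_perpHyperplane_iff_dotProduct_eq]

theorem disjoint_perpHyperplane_of_smul_eq {x z z' : ι → F} {a : F}
    (ha : a • (z - x) = z' - x) (hz : (z - x) ⬝ᵥ (z - x) ≠ 0) (hz'x : z' ≠ x) (hzz' : z ≠ z') :
    Disjoint (perpHyperplane x z) (perpHyperplane x z') := by
  refine disjoint_left.mpr fun y hy hy' ↦ hzz' ?_
  have ha0 : a ≠ 0 := by
    rintro rfl
    exact hz'x (sub_eq_zero.mp (by rw [← ha, zero_smul]))
  rw [mem_perpHyperplane_iff_dotProduct_eq] at hy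
  rw [mem_perpHyperplane, ← ha, smul_dotProduct, smul_eq_mul, mul_eq_zero,
    or_iff_right ha0] at hy'
  have hyz' : y - z' = (y - z) - (a - 1) • (z - x) := by
    rw [sub_smul, ha, one_smul]
    abel
  have ha1 : a = 1 := by
    rw [hyz', dotProduct_sub, dotProduct_sub, hy, dotProduct_smul, sub_self, zero_sub,
      neg_eq_zero, smul_eq_mul, mul_eq_zero, or_iff_left hz, sub_eq_zero] at hy'
    exact hy'
  exact sub_left_injective (by simpa only [ha1, one_smul] using ha)

theorem card_sq_mul_card_perpHyperplane_inter_le {x z z' : ι → F}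
    (hz : (z - x) ⬝ᵥ (z - x) ≠ 0) (hz'x : z' ≠ x) (hzz' : z ≠ z') :
    Fintype.card F ^ 2 * #(perpHyperplane x z ∩ perpHyperplane x z') ≤
      Fintype.card F ^ Fintype.card ι := by
  have hzx : z - x ≠ 0 := fun h ↦ hz (by rw [h, zero_dotProduct])
  by_cases hv : LinearIndependent F ![z - x, z' - x]
  · rw [← card_pow_mul_card_dotProduct_eq hv ![(z - x) ⬝ᵥ z, (z' - x) ⬝ᵥ z'], Fintype.card_fin]
    refine (congrArg _ (congrArg card ?_)).le
    ext y
    simp [mem_perpHyperplane_iff_dotProduct_eq, Fin.forall_fin_two]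
  · simp only [LinearIndependent.pair_iff' hzx, not_forall, not_not] at hv
    obtain ⟨a, ha⟩ := hv
    rw [disjoint_iff_inter_eq_empty.mp (disjoint_perpHyperplane_of_smul_eq ha hz hz'x hzz')]
    simp

theorem card_mul_sum_card_inter_perpHyperplane_le {x : ι → F} (A B : Finset (ι → F))
    (hB : ∀ z ∈ B, (z - x) ⬝ᵥ (z - x) ≠ 0) :
    (Fintype.card F : ℝ) * ∑ z ∈ B, (#(A ∩ perpHyperplane x z) : ℝ) ≤
      #A * #B + √(#A * #B * Fintype.card F ^ (Fintype.card ι + 1)) := by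
  have hne (z) (hz : z ∈ B) : z ≠ x := by
    rintro rfl
    exact hB z hz (by rw [sub_self, zero_dotProduct])
  have hsq := sq_sum_card_inter_sub_le (q := Fintype.card F) (perpHyperplane x) A B
    (fun z hz ↦ by
      rw [Fintype.card_fun]
      exact_mod_cast card_mul_card_perpHyperplane (hne z hz))
    (fun z hz z' hz' hzz' ↦ by
      rw [Fintype.card_fun]
      exact_mod_cast card_sq_mul_card_perpHyperplane_inter_le (hB z hz) (hne z' hz') hzz')
  rw [← sub_le_iff_le_add']
  refine Real.le_sqrt_of_sq_le (hsq.trans ?_)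
  rw [mul_assoc, pow_succ', Fintype.card_fun, Nat.cast_pow]
  gcongr
  linarith

end PerpHyperplane

section GaussSum

theorem ringChar_ne_two_of_not_isSquare_neg_one {F : Type*} [Field F] [Finite F]
    (hF : ¬IsSquare (-1 : F)) : ringChar F ≠ 2 :=
  fun h ↦ hF (FiniteField.isSquare_of_char_two h _)

variable {F R ι : Type*} [Field F] [Fintype F] [CommRing R]

theorem addChar_sum {A M : Type*} [AddCommMonoid A] [CommMonoid M] (χ : AddChar A M)
    (s : Finset ι) (f : ι → A) : χ (∑ i ∈ s, f i) = ∏ i ∈ s, χ (f i) :=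
  map_prod χ.toMonoidHom (fun i ↦ Multiplicative.ofAdd (f i)) s

theorem sum_addChar_dotProduct [IsDomain R] [DecidableEq F] [Fintype ι] [DecidableEq ι]
    {χ : AddChar F R} (hχ : χ.IsPrimitive) (u : ι → F) :
    ∑ y, χ (y ⬝ᵥ u) = if u = 0 then (Fintype.card F : R) ^ Fintype.card ι else 0 := by
  simp only [dotProduct, addChar_sum]
  rw [← Fintype.prod_sum fun i v ↦ χ (v * u i)]
  simp only [AddChar.sum_mulShift _ hχ]
  split_ifs with hu
  · simp [hu]
  · obtain ⟨i, hi : u i ≠ 0⟩ := Function.ne_iff.mp hu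
    exact prod_eq_zero (mem_univ i) (by rw [if_neg hi, Nat.cast_zero])

theorem sum_addChar_sq [IsDomain R] [DecidableEq F] (hF : ringChar F ≠ 2) {χ : AddChar F R}
    (hχ : χ ≠ 1) :
    ∑ v, χ (v ^ 2) = gaussSum ((quadraticChar F).ringHomComp (Int.castRingHom R)) χ := by
  have hcard (a : F) : (#{v : F | v ^ 2 = a} : R) = quadraticChar F a + 1 := by
    have h := congrArg (Int.cast : ℤ → R) (quadraticChar_card_sqrts hF a)
    simpa [Set.toFinset_ofPred] using h
  calc ∑ v, χ (v ^ 2) = ∑ a, #{v : F | v ^ 2 = a} • χ a :=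
        (sum_comp χ _).trans (sum_subset (subset_univ _) (by simp +contextual))
    _ = ∑ a, (quadraticChar F a * χ a + χ a) := by simp only [nsmul_eq_mul, hcard, add_one_mul]
    _ = _ := by
      rw [sum_add_distrib, AddChar.sum_eq_zero_of_ne_one hχ, add_zero]
      rfl

theorem sq_sum_addChar_sq [IsDomain R] [CharZero R] (hF : ¬IsSquare (-1 : F)) {χ : AddChar F R}
    (hχ : χ.IsPrimitive) : (∑ v, χ (v ^ 2)) ^ 2 = -(Fintype.card F : R) := by
  classical
  have hchar : ringChar F ≠ 2 := ringChar_ne_two_of_not_isSquare_neg_one hF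
  have hχ1 : χ ≠ 1 := by simpa using hχ one_ne_zero
  rw [sum_addChar_sq hchar hχ1, gaussSum_sq
    ((MulChar.ringHomComp_ne_one_iff Int.cast_injective).mpr (quadraticChar_ne_one hchar))
    ((quadraticChar_isQuadratic F).comp _) hχ]
  simp [quadraticChar_neg_one_iff_not_isSquare.mpr hF]

theorem sum_addChar_mul_sq_add (h2 : (2 : F) ≠ 0) (χ : AddChar F R) {s : F} (hs : s ≠ 0) (b : F) :
    ∑ v, χ (s * v ^ 2 + v * b) = χ (-(2 ^ 2 * s)⁻¹ * b ^ 2) * ∑ v, χ (s * v ^ 2) := by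
  rw [mul_sum]
  refine Fintype.sum_equiv (Equiv.addRight (b / (2 * s))) _ _ fun v ↦ ?_
  rw [← AddChar.map_add_eq_mul, Equiv.coe_addRight]
  congr 1
  field_simp
  ring

theorem sum_addChar_mul_dotProduct_self_add [Fintype ι] [DecidableEq ι] (h2 : (2 : F) ≠ 0)
    (χ : AddChar F R) {s : F} (hs : s ≠ 0) (u : ι → F) :
    ∑ ξ : ι → F, χ (s * (ξ ⬝ᵥ ξ) + ξ ⬝ᵥ u) =
      χ (-(2 ^ 2 * s)⁻¹ * (u ⬝ᵥ u)) * (∑ v, χ (s * v ^ 2)) ^ Fintype.card ι := by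
  simp only [dotProduct, mul_sum, ← sum_add_distrib, addChar_sum, ← sq]
  rw [← Fintype.prod_sum fun i v ↦ χ (s * v ^ 2 + v * u i)]
  simp only [sum_addChar_mul_sq_add h2 χ hs]
  rw [prod_mul_distrib, prod_const, card_univ]

end GaussSum

section Parseval

variable {F ι : Type*} [Field F] [Fintype F] [Fintype ι] [DecidableEq ι]

theorem sum_mul_norm_sum_addChar_sq (χ : AddChar F ℂ) (w : (ι → F) → ℝ)
    (A : Finset (ι → F)) :
    ((∑ ξ, w ξ * ‖∑ z ∈ A, χ (ξ ⬝ᵥ z)‖ ^ 2 : ℝ) : ℂ) =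
      ∑ x ∈ A, ∑ z ∈ A, ∑ ξ, w ξ * χ (ξ ⬝ᵥ (z - x)) := by
  have hnorm (ξ : ι → F) :
      ((‖∑ z ∈ A, χ (ξ ⬝ᵥ z)‖ ^ 2 : ℝ) : ℂ) = ∑ x ∈ A, ∑ z ∈ A, χ (ξ ⬝ᵥ (z - x)) := by
    push_cast
    rw [← Complex.conj_mul', map_sum, sum_mul_sum]
    refine sum_congr rfl fun x _ ↦ sum_congr rfl fun z _ ↦ ?_
    rw [← AddChar.map_neg_eq_conj, ← AddChar.map_add_eq_mul, dotProduct_sub, neg_add_eq_sub]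
  simp only [Complex.ofReal_sum, Complex.ofReal_mul, hnorm, mul_sum]
  rw [sum_comm]
  simp only [sum_comm (s := univ)]

theorem sum_norm_sum_addChar_sq {χ : AddChar F ℂ} (hχ : χ.IsPrimitive)
    (A : Finset (ι → F)) :
    ∑ ξ : ι → F, ‖∑ z ∈ A, χ (ξ ⬝ᵥ z)‖ ^ 2 = (Fintype.card F : ℝ) ^ Fintype.card ι * #A := by
  classical
  have h := sum_mul_norm_sum_addChar_sq χ (fun _ ↦ 1) A
  simp only [one_mul, Complex.ofReal_one, sum_addChar_dotProduct hχ, sub_eq_zero] at h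
  rw [← Complex.ofReal_inj, h]
  simp [mul_comm]

end Parseval

section IsotropicWeight

variable {F ι : Type*} [Field F] [Fintype F] [DecidableEq F] [Fintype ι] {m : ℕ}

/-- The function `q · 1_{u ⬝ u = 0} - 1` on `F ^ ι`, where `q = |F|`: the indicator function of the
isotropic vectors, rescaled so that it is the sum of the quadratic phases `χ (s (u ⬝ u))`
over `s ≠ 0`. -/
def isotropicWeight (u : ι → F) : ℝ := (if u ⬝ᵥ u = 0 then (Fintype.card F : ℝ) else 0) - 1

theorem neg_one_le_isotropicWeight (u : ι → F) : -1 ≤ isotropicWeight u := by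
  rw [isotropicWeight]
  split_ifs
  · linarith [(Nat.cast_nonneg (Fintype.card F) : (0 : ℝ) ≤ Fintype.card F)]
  · simp

theorem isotropicWeight_eq_sum_addChar {χ : AddChar F ℂ} (hχ : χ.IsPrimitive) (u : ι → F) :
    (isotropicWeight u : ℂ) = ∑ s with s ≠ 0, χ (s * (u ⬝ᵥ u)) := by
  have h := AddChar.sum_mulShift (u ⬝ᵥ u) hχ
  rw [← add_sum_erase univ _ (mem_univ 0), zero_mul, AddChar.map_zero_eq_one] at h
  rw [filter_ne', isotropicWeight, eq_sub_of_add_eq' h]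
  split_ifs <;> simp

theorem sum_isotropicWeight_mul_addChar [DecidableEq ι] (hF : ¬IsSquare (-1 : F)) (hm : Odd m)
    (hι : Fintype.card ι = 2 * m) {χ : AddChar F ℂ} (hχ : χ.IsPrimitive) (u : ι → F) :
    ∑ ξ : ι → F, (isotropicWeight ξ : ℂ) * χ (ξ ⬝ᵥ u) =
      -(Fintype.card F : ℂ) ^ m * isotropicWeight u := by
  have h2 : (2 : F) ≠ 0 := Ring.two_ne_zero (ringChar_ne_two_of_not_isSquare_neg_one hF)
  have hgauss (s : F) (hs : s ≠ 0) :
      (∑ v, χ (s * v ^ 2)) ^ Fintype.card ι = -(Fintype.card F : ℂ) ^ m := by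
    have hχs : (χ.mulShift s).IsPrimitive := fun a ha ↦ by
      rw [AddChar.mulShift_mulShift]
      exact hχ (mul_ne_zero hs ha)
    rw [hι, pow_mul, ← hm.neg_pow, ← sq_sum_addChar_sq hF hχs]
    rfl
  simp only [isotropicWeight_eq_sum_addChar hχ, sum_mul, ← AddChar.map_add_eq_mul]
  rw [sum_comm, mul_sum]
  -- Completing the square exchanges the phases `s` and `-1 / (4 s)`.
  refine sum_bij' (fun s _ ↦ -(2 ^ 2 * s)⁻¹) (fun s _ ↦ -(2 ^ 2 * s)⁻¹) ?_ ?_ ?_ ?_ ?_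
  · simp [h2]
  · simp [h2]
  · intro s _
    field_simp
  · intro s _
    field_simp
  · intro s hs
    have hs0 : s ≠ 0 := (mem_filter.mp hs).2
    rw [sum_addChar_mul_dotProduct_self_add h2 χ hs0, hgauss s hs0, mul_comm]

theorem sum_isotropicWeight_sub_le (hF : ¬IsSquare (-1 : F)) (hm : Odd m)
    (hι : Fintype.card ι = 2 * m) (A : Finset (ι → F)) :
    ∑ x ∈ A, ∑ z ∈ A, isotropicWeight (z - x) ≤ (Fintype.card F : ℝ) ^ m * #A := by
  classical
  let χ := AddChar.FiniteField.primitiveChar_to_Complex F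
  have hχ : χ.IsPrimitive := AddChar.FiniteField.primitiveChar_to_Complex_isPrimitive F
  have hfourier : ∑ ξ, isotropicWeight ξ * ‖∑ z ∈ A, χ (ξ ⬝ᵥ z)‖ ^ 2 =
      -(Fintype.card F : ℝ) ^ m * ∑ x ∈ A, ∑ z ∈ A, isotropicWeight (z - x) := by
    rw [← Complex.ofReal_inj, sum_mul_norm_sum_addChar_sq]
    simp only [sum_isotropicWeight_mul_addChar hF hm hι hχ, ← mul_sum]
    push_cast
    rfl
  have hlower : -∑ ξ : ι → F, ‖∑ z ∈ A, χ (ξ ⬝ᵥ z)‖ ^ 2 ≤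
      ∑ ξ, isotropicWeight ξ * ‖∑ z ∈ A, χ (ξ ⬝ᵥ z)‖ ^ 2 := by
    rw [← sum_neg_distrib]
    refine sum_le_sum fun ξ _ ↦ ?_
    rw [neg_eq_neg_one_mul]
    gcongr
    exact neg_one_le_isotropicWeight ξ
  rw [hfourier, sum_norm_sum_addChar_sq hχ, neg_mul, neg_le_neg_iff, hι, two_mul, pow_add,
    mul_assoc] at hlower
  have hq : (0 : ℝ) < Fintype.card F := Nat.cast_pos.mpr Fintype.card_pos
  exact le_of_mul_le_mul_left hlower (pow_pos hq m)

theorem card_mul_sum_card_isotropic_le (hF : ¬IsSquare (-1 : F)) (hm : Odd m)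
    (hι : Fintype.card ι = 2 * m) (A : Finset (ι → F)) :
    (Fintype.card F : ℝ) * ∑ x ∈ A, (#{z ∈ A | (z - x) ⬝ᵥ (z - x) = 0} : ℝ) ≤
      #A ^ 2 + Fintype.card F ^ m * #A := by
  have h := sum_isotropicWeight_sub_le hF hm hι A
  simp only [isotropicWeight, sum_sub_distrib, ← sum_filter, sum_const, nsmul_eq_mul, mul_one,
    ← sum_mul] at h
  linarith

end IsotropicWeight

section RightAngles

variable {F ι : Type*} [Field F] [Fintype F] [DecidableEq F] [Fintype ι] [DecidableEq ι]

/-- The triples `(x, z, y)` of points of `A` with a right angle at the middle point `z`, the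
degenerate triples with `x = z` or `z = y` included. -/
def rightAngles (A : Finset (ι → F)) : Finset ((ι → F) × (ι → F) × (ι → F)) :=
  {t ∈ A ×ˢ A ×ˢ A | t.2.2 ∈ perpHyperplane t.1 t.2.1}

theorem card_rightAngles_le (A : Finset (ι → F)) : #(rightAngles A) ≤ #A ^ 3 :=
  (card_filter_le _ _).trans_eq (by simp only [card_product]; ring)

theorem card_rightAngles (A : Finset (ι → F)) :
    #(rightAngles A) = ∑ x ∈ A, ∑ z ∈ A, #(A ∩ perpHyperplane x z) := by
  simp only [rightAngles, card_filter, sum_product, ← filter_mem_eq_inter]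

theorem card_mul_sum_card_inter_perpHyperplane_le_add (x : ι → F) (A : Finset (ι → F)) :
    (Fintype.card F : ℝ) * ∑ z ∈ A, (#(A ∩ perpHyperplane x z) : ℝ) ≤
      Fintype.card F * #{z ∈ A | (z - x) ⬝ᵥ (z - x) = 0} * #A +
        (#A ^ 2 + √(Fintype.card F ^ (Fintype.card ι + 1)) * #A) := by
  rw [← sum_filter_add_sum_filter_not A (fun z ↦ (z - x) ⬝ᵥ (z - x) = 0), mul_add]
  gcongr ?_ + ?_
  · rw [mul_assoc, ← nsmul_eq_mul (#{z ∈ A | (z - x) ⬝ᵥ (z - x) = 0})]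
    gcongr
    refine sum_le_card_nsmul _ _ _ fun z _ ↦ ?_
    gcongr
    exact inter_subset_left
  · refine (card_mul_sum_card_inter_perpHyperplane_le A _
      fun z hz ↦ (mem_filter.mp hz).2).trans ?_
    calc _ ≤ (#A : ℝ) * #A + √(#A * #A * Fintype.card F ^ (Fintype.card ι + 1)) := by
          gcongr <;> exact filter_subset _ _
      _ = _ := by
        rw [Real.sqrt_mul (by positivity), Real.sqrt_mul_self (by positivity)]
        ring

theorem card_mul_card_rightAngles_le (hF : ¬IsSquare (-1 : F)) {m : ℕ} (hm : Odd m)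
    (hι : Fintype.card ι = 2 * m) (A : Finset (ι → F)) :
    (Fintype.card F : ℝ) * #(rightAngles A) ≤
      2 * (#A ^ 3 + √(Fintype.card F ^ (Fintype.card ι + 1)) * #A ^ 2) := by
  have hq : (1 : ℝ) ≤ Fintype.card F := Nat.one_le_cast.mpr Fintype.card_pos
  set q : ℝ := (Fintype.card F : ℝ)
  have hpow : q ^ m ≤ √(q ^ (Fintype.card ι + 1)) := by
    refine Real.le_sqrt_of_sq_le ?_
    rw [← pow_mul]
    exact pow_le_pow_right₀ hq (by lia)
  have hisotropic := card_mul_sum_card_isotropic_le hF hm hι A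
  calc q * #(rightAngles A) = ∑ x ∈ A, q * ∑ z ∈ A, (#(A ∩ perpHyperplane x z) : ℝ) := by
        rw [card_rightAngles]
        push_cast
        rw [mul_sum]
    _ ≤ ∑ x ∈ A, (q * #{z ∈ A | (z - x) ⬝ᵥ (z - x) = 0} * #A +
        (#A ^ 2 + √(q ^ (Fintype.card ι + 1)) * #A)) := sum_le_sum fun x _ ↦
          card_mul_sum_card_inter_perpHyperplane_le_add x A
    _ = q * ∑ x ∈ A, (#{z ∈ A | (z - x) ⬝ᵥ (z - x) = 0} : ℝ) * #A +
        (#A ^ 3 + √(q ^ (Fintype.card ι + 1)) * #A ^ 2) := by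
      rw [sum_add_distrib, sum_const, nsmul_eq_mul, mul_sum]
      simp only [mul_assoc, ← mul_sum, ← sum_mul]
      ring
    _ ≤ 2 * (#A ^ 3 + √(q ^ (Fintype.card ι + 1)) * #A ^ 2) := by
      have hisotropicA := mul_le_mul_of_nonneg_right hisotropic (Nat.cast_nonneg (α := ℝ) #A)
      have hpowA := mul_le_mul_of_nonneg_right hpow (sq_nonneg (#A : ℝ))
      rw [← sum_mul]
      linarith

end RightAngles

section Paraboloid

variable {F : Type} [Field F] [Fintype F] [DecidableEq F] {d : ℕ}
  {E : Finset ((Fin (d - 1) → F) × F)}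

theorem snd_eq_of_mem_parab {x : (Fin (d - 1) → F) × F} (hx : x ∈ parab F d) :
    x.2 = x.1 ⬝ᵥ x.1 :=
  (mem_filter.mp hx).2

theorem injOn_fst_parab : Set.InjOn Prod.fst (parab F d : Set ((Fin (d - 1) → F) × F)) :=
  fun x hx y hy hxy ↦ Prod.ext hxy <| by
    rw [snd_eq_of_mem_parab hx, snd_eq_of_mem_parab hy, hxy]

theorem mem_perpHyperplane_of_add_eq_add (h2 : (2 : F) ≠ 0) {x y z w : (Fin (d - 1) → F) × F}
    (hx : x ∈ parab F d) (hy : y ∈ parab F d) (hz : z ∈ parab F d) (hw : w ∈ parab F d)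
    (h : x + y = z + w) : y.1 ∈ perpHyperplane x.1 z.1 := by
  have hw1 : w.1 = x.1 + y.1 - z.1 := eq_sub_of_add_eq' (congrArg Prod.fst h).symm
  have hsnd : x.2 + y.2 = z.2 + w.2 := congrArg Prod.snd h
  rw [snd_eq_of_mem_parab hx, snd_eq_of_mem_parab hy, snd_eq_of_mem_parab hz,
    snd_eq_of_mem_parab hw, hw1] at hsnd
  simp only [add_dotProduct, sub_dotProduct, dotProduct_add, dotProduct_sub] at hsnd
  rw [mem_perpHyperplane, sub_dotProduct, dotProduct_sub, dotProduct_sub]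
  refine mul_left_cancel₀ h2 ?_
  linear_combination hsnd - dotProduct_comm x.1 y.1 + dotProduct_comm x.1 z.1
    + dotProduct_comm z.1 y.1

theorem lambda4_le_card_rightAngles (h2 : (2 : F) ≠ 0) (hE : E ⊆ parab F d) :
    lambda4 E ≤ #(rightAngles (E.image Prod.fst)) := by
  refine card_le_card_of_injOn (fun t ↦ (t.1.1, t.2.2.1.1, t.2.1.1)) ?_ ?_
  · rintro ⟨x, y, z, w⟩ ht
    simp only [coe_filter, mem_product, Set.mem_ofPred_eq] at ht
    obtain ⟨⟨hx, hy, hz, hw⟩, hadd⟩ := ht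
    simpa only [rightAngles, coe_filter, mem_product, Set.mem_ofPred_eq] using
      ⟨⟨mem_image_of_mem _ hx, mem_image_of_mem _ hz, mem_image_of_mem _ hy⟩,
        mem_perpHyperplane_of_add_eq_add h2 (hE hx) (hE hy) (hE hz) (hE hw) hadd⟩
  · rintro ⟨x, y, z, w⟩ ht ⟨x', y', z', w'⟩ ht' heq
    simp only [coe_filter, mem_product, Set.mem_ofPred_eq] at ht ht'
    obtain ⟨⟨hx, hy, hz, -⟩, hadd⟩ := ht
    obtain ⟨⟨hx', hy', hz', -⟩, hadd'⟩ := ht'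
    simp only [Prod.mk.injEq] at heq
    obtain rfl := injOn_fst_parab (hE hx) (hE hx') heq.1
    obtain rfl := injOn_fst_parab (hE hz) (hE hz') heq.2.1
    obtain rfl := injOn_fst_parab (hE hy) (hE hy') heq.2.2
    rw [add_left_cancel (hadd.symm.trans hadd')]

theorem sqrt_pow_eq_mul_rpow {q : ℝ} (hq : 0 ≤ q) {d : ℕ} (hd : d ≠ 0) :
    √(q ^ d) = q * q ^ (((d : ℝ) - 2) / 2) := by
  have hexp : 1 + ((d : ℝ) - 2) / 2 = d / 2 := by ring
  have hd' : (d : ℝ) / 2 ≠ 0 := div_ne_zero (Nat.cast_ne_zero.mpr hd) two_ne_zero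
  rw [← Real.rpow_one_add' hq (hexp ▸ hd'), hexp, Real.sqrt_eq_rpow, ← Real.rpow_natCast,
    ← Real.rpow_mul hq, mul_one_div]

theorem additive_quadruples_min_bound_odd_general (hF : ¬IsSquare (-1 : F)) (hd : d % 4 = 3)
    (hE : E ⊆ parab F d) :
    (lambda4 E : ℝ) ≤ 2 * min ((#E : ℝ) ^ 3)
      ((Fintype.card F : ℝ)⁻¹ * #E ^ 3 + (Fintype.card F : ℝ) ^ (((d : ℝ) - 2) / 2) * #E ^ 2) := by
  have h2 : (2 : F) ≠ 0 := Ring.two_ne_zero (ringChar_ne_two_of_not_isSquare_neg_one hF)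
  have hq : (0 : ℝ) < Fintype.card F := Nat.cast_pos.mpr Fintype.card_pos
  obtain ⟨m, hm, hdm⟩ : ∃ m, Odd m ∧ d = 2 * m + 1 :=
    ⟨d / 2, Nat.odd_iff.mpr (by lia), by lia⟩
  set A := E.image Prod.fst
  have hΛ : (lambda4 E : ℝ) ≤ #(rightAngles A) := by
    exact_mod_cast lambda4_le_card_rightAngles h2 hE
  have hA : (#A : ℝ) ≤ #E := by exact_mod_cast card_image_le
  have hA3 : (#(rightAngles A) : ℝ) ≤ #A ^ 3 := by exact_mod_cast card_rightAngles_le A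
  have hmain := card_mul_card_rightAngles_le hF hm (by rw [Fintype.card_fin]; lia) A
  rw [Fintype.card_fin, show d - 1 + 1 = d by lia] at hmain
  rw [mul_min_of_nonneg _ _ zero_le_two]
  refine le_min ?_ ?_
  · calc (lambda4 E : ℝ) ≤ #E ^ 3 := hΛ.trans (hA3.trans (by gcongr))
      _ ≤ 2 * #E ^ 3 := le_mul_of_one_le_left (by positivity) one_le_two
  · calc (lambda4 E : ℝ) ≤ #(rightAngles A) := hΛ
      _ = (Fintype.card F : ℝ)⁻¹ * (Fintype.card F * #(rightAngles A)) := by field_simp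
      _ ≤ (Fintype.card F : ℝ)⁻¹ * (2 * (#E ^ 3 + √(Fintype.card F ^ d) * #E ^ 2)) := by
        refine mul_le_mul_of_nonneg_left (hmain.trans ?_) (by positivity)
        gcongr
      _ = _ := by
        rw [sqrt_pow_eq_mul_rpow hq.le (by lia)]
        field_simp

end Paraboloid

theorem odd_and_mod_four_eq_three_of_not_four_dvd {d l : ℕ} (hd : Odd d) (hl : ¬4 ∣ l * (d - 1)) :
    Odd l ∧ d % 4 = 3 := by
  obtain ⟨m, rfl⟩ := hd
  rw [add_tsub_cancel_right, mul_left_comm, show 4 = 2 * 2 by rfl,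
    Nat.mul_dvd_mul_iff_left two_pos, ← even_iff_two_dvd, Nat.not_even_iff_odd,
    Nat.odd_mul] at hl
  refine ⟨hl.1, ?_⟩
  have := Nat.odd_iff.mp hl.2
  lia

theorem pow_mod_four_eq_three {p l : ℕ} (hp : p % 4 = 3) (hl : Odd l) : p ^ l % 4 = 3 := by
  obtain ⟨a, rfl⟩ := hl
  rw [pow_succ, pow_mul, Nat.mul_mod, Nat.pow_mod, Nat.pow_mod p 2 4, hp]
  norm_num

/-- For odd `d ≥ 3` and `q = p̲^l` with `p̲ ≡ 3 (mod 4)` prime and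
`4 ∤ l(d-1)`: `Λ₄(E) ≲ min { |E|³, q⁻¹|E|³ + q^{(d-3)/4}|E|^{5/2} + q^{(d-2)/2}|E|² }`. -/
theorem additive_quadruples_min_bound_odd (d : ℕ) (hd3 : 3 ≤ d) (hdodd : Odd d) :
    ∃ C : ℝ, 0 < C ∧
      ∀ (F : Type) [Field F] [Fintype F] [DecidableEq F], ∀ pp l : ℕ,
        pp.Prime → pp % 4 = 3 → Fintype.card F = pp ^ l → ¬ (4 ∣ l * (d - 1)) →
        ∀ E : Finset ((Fin (d - 1) → F) × F), E ⊆ parab F d →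
          (lambda4 E : ℝ) ≤
            C * min ((E.card : ℝ) ^ 3)
              ((Fintype.card F : ℝ)⁻¹ * (E.card : ℝ) ^ 3 +
                (Fintype.card F : ℝ) ^ (((d : ℝ) - 3) / 4) * (E.card : ℝ) ^ ((5 : ℝ) / 2) +
                (Fintype.card F : ℝ) ^ (((d : ℝ) - 2) / 2) * (E.card : ℝ) ^ 2) := by
  refine ⟨2, two_pos, fun F _ _ _ p l _ hp hcard hl E hE ↦ ?_⟩
  obtain ⟨hlodd, hd⟩ := odd_and_mod_four_eq_three_of_not_four_dvd hdodd hl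
  have hF : ¬IsSquare (-1 : F) := by
    rw [FiniteField.isSquare_neg_one_iff, not_not, hcard, pow_mod_four_eq_three hp hlodd]
  refine (additive_quadruples_min_bound_odd_general hF hd hE).trans ?_
  gcongr
  exact le_add_of_nonneg_right (by positivity)
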